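/- Consider the full SARAH algorithm, where each outer iteration runs SARAH-IN starting from the previous output: w̃_s = SARAH-IN(w̃_{s−1}, η, b, m). Suppose each f_i is L-smooth, P is τ-gradient dominated, η ≤ 2 / ( L ( sqrt(1 + (4m/b)·((n−b)/(n−1))) + 1 ) ), and η(m+1)/2 > τ. Then E[||∇P(w̃_s)||²] ≤ (γ̄_m)^s · ||∇P(w̃_0)||², where γ̄_m = 2τ/(η(m+1)) < 1. -/

import Mathlib

open scoped BigOperators

noncomputable section

/-- Vectors in `ℝ^d`. -/
abbrev Vec (d : ℕ) := EuclideanSpace ℝ (Fin d)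

/-- The type of mini-batches of size `b` from `{1,…,n}` (modeled as `Fin n`). -/
def Batch (n b : ℕ) : Type := {s : Finset (Fin n) // s.card = b}

instance (n b : ℕ) : Fintype (Batch n b) :=
  inferInstanceAs (Fintype {s : Finset (Fin n) // s.card = b})

/-- Expectation (uniform average) over a finite sample space. -/
def expec {Ω : Type*} [Fintype Ω] (F : Ω → ℝ) : ℝ :=
  (Fintype.card Ω : ℝ)⁻¹ * ∑ ω, F ω

/-- The SARAH-IN state `(w_t, v_t)` given a starting point `w0`, a learning rate `η`,
a batch size `b` and a sequence of mini-batches `I` (where `I t` is the batch used to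
form `v_t`, for `t ≥ 1`). -/
def sarahState {d n : ℕ} (f : Fin n → Vec d → ℝ) (w0 : Vec d) (η : ℝ) (b : ℕ)
    (I : ℕ → Finset (Fin n)) : ℕ → Vec d × Vec d
  | 0 => (w0, (n : ℝ)⁻¹ • ∑ i, gradient (f i) w0)
  | t + 1 =>
    let p := sarahState f w0 η b I t
    let w' := p.1 - η • p.2
    (w', (b : ℝ)⁻¹ • ∑ i ∈ I (t + 1), (gradient (f i) w' - gradient (f i) p.1) + p.2)

/-- Extend a finite sequence of mini-batches to all of `ℕ` (indices `≥ T` are irrelevant). -/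
def pad {n b T : ℕ} (ω : Fin T → Batch n b) : ℕ → Finset (Fin n) :=
  fun t => if h : t < T then (ω ⟨t, h⟩).1 else ∅

/-- The outer iterates of full SARAH: `w̃_{s} = SARAH-IN(w̃_{s−1}, η, b, ·)`, where the
`s`-th outer iteration uses the sequence of mini-batches `(ω s).1` and returns the iterate
with index `(ω s).2`. -/
def outerIter {d n : ℕ} (f : Fin n → Vec d → ℝ) (w0 : Vec d) (η : ℝ) (b : ℕ)
    (ω : ℕ → (ℕ → Finset (Fin n)) × ℕ) : ℕ → Vec d
  | 0 => w0
  | s + 1 => (sarahState f (outerIter f w0 η b ω s) η b (ω s).1 ((ω s).2)).1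

/-- Extend finitely many outer-loop random seeds (each consisting of `m+1` mini-batches and
a uniformly random output index in `{0,…,m}`) to all of `ℕ`. -/
def padOuter {n b m S : ℕ} (ω : Fin S → (Fin (m + 1) → Batch n b) × Fin (m + 1)) :
    ℕ → (ℕ → Finset (Fin n)) × ℕ :=
  fun k => if h : k < S then (pad (ω ⟨k, h⟩).1, ((ω ⟨k, h⟩).2 : ℕ)) else (fun _ => ∅, 0)

/-! ### Averages -/

lemma expec_mono {Ω : Type*} [Fintype Ω] {F G : Ω → ℝ} (h : ∀ ω, F ω ≤ G ω) :
    expec F ≤ expec G := by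
  unfold expec
  exact mul_le_mul_of_nonneg_left (Finset.sum_le_sum fun i _ => h i) (by positivity)

lemma expec_const_mul {Ω : Type*} [Fintype Ω] (c : ℝ) (F : Ω → ℝ) :
    expec (fun ω => c * F ω) = c * expec F := by
  unfold expec
  rw [← Finset.mul_sum]; ring

lemma expec_const_add {Ω : Type*} [Fintype Ω] [Nonempty Ω] (c : ℝ) (F : Ω → ℝ) :
    expec (fun ω => c + F ω) = c + expec F := by
  unfold expec
  have : (Fintype.card Ω : ℝ) ≠ 0 := by exact_mod_cast Fintype.card_ne_zero
  rw [Finset.sum_add_distrib, mul_add]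
  simp [this]

lemma expec_cons {B : Type*} [Fintype B] (k : ℕ) (F : (Fin (k + 1) → B) → ℝ) :
    expec F = expec fun a : B => expec fun ω : Fin k → B => F (Fin.cons a ω) := by
  have h : ∑ ω, F ω = ∑ a : B, ∑ ω : Fin k → B, F (Fin.cons a ω) := by
    rw [← Fintype.sum_prod_type']
    exact (Fintype.sum_equiv (Fin.consEquiv fun _ : Fin (k + 1) => B) _ _ fun x => rfl).symm
  unfold expec
  rw [h, ← Finset.mul_sum]
  simp [pow_succ]
  ring

lemma expec_prod {A B : Type*} [Fintype A] [Fintype B] (F : A × B → ℝ) :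
    expec F = expec fun a : A => expec fun b : B => F (a, b) := by
  unfold expec
  rw [Fintype.sum_prod_type, ← Finset.mul_sum]
  simp
  ring

/-! ### Sampling without replacement -/

lemma batch_sum {n b : ℕ} (F : Finset (Fin n) → ℝ) :
    ∑ I : Batch n b, F I.1 = ∑ I ∈ Finset.powersetCard b (Finset.univ : Finset (Fin n)), F I := by
  refine (Finset.sum_subtype (p := fun s : Finset (Fin n) => s.card = b)
    (F := inferInstanceAs (Fintype (Batch n b))) _ (fun s => ?_) F).symm
  simp [Finset.mem_powersetCard]

lemma batch_card {n b : ℕ} : (Fintype.card (Batch n b) : ℝ) = (n.choose b : ℝ) := by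
  have := batch_sum (n := n) (b := b) (fun _ => 1)
  simpa using this

lemma batch_count {n b : ℕ} (T : Finset (Fin n)) (hT : T.card ≤ b) :
    ∑ I : Batch n b, (if T ⊆ I.1 then (1 : ℝ) else 0) = ((n - T.card).choose (b - T.card) : ℝ) := by
  rw [batch_sum (fun I => if T ⊆ I then (1 : ℝ) else 0), Finset.sum_boole,
    Finset.card_filter_powersetCard_subset _ _ _ (Finset.subset_univ _)]
  · simp
  · exact hT

lemma batch_pair {n b : ℕ} (hn : 2 ≤ n) (hb : 1 ≤ b) (hbn : b ≤ n) :
    ∃ α β : ℝ, (n : ℝ) * α = b * (Fintype.card (Batch n b) : ℝ) ∧ ((n : ℝ) - 1) * β = (b - 1) * α ∧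
      (∀ i : Fin n, ∑ I : Batch n b, (if i ∈ I.1 then (1 : ℝ) else 0) = α) ∧
      ∀ i j : Fin n, ∑ I : Batch n b, (if i ∈ I.1 ∧ j ∈ I.1 then (1 : ℝ) else 0)
        = β + if i = j then α - β else 0 := by
  obtain ⟨n, rfl⟩ := Nat.exists_eq_add_of_le' hn
  obtain ⟨b, rfl⟩ := Nat.exists_eq_add_of_le' hb
  have h1 : ∀ i : Fin (n + 2), ∑ I : Batch (n + 2) (b + 1), (if i ∈ I.1 then (1 : ℝ) else 0)
      = ((n + 1).choose b : ℝ) := by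
    intro i
    have := batch_count (b := b + 1) ({i} : Finset (Fin (n + 2))) (by simp)
    simpa using this
  have hα : ((n + 2 : ℕ) : ℝ) * ((n + 1).choose b : ℝ)
      = ((b + 1 : ℕ) : ℝ) * (Fintype.card (Batch (n + 2) (b + 1)) : ℝ) := by
    rw [batch_card]
    have := Nat.add_one_mul_choose_eq (n + 1) b
    rw [mul_comm (((b + 1 : ℕ) : ℝ))]
    exact_mod_cast this
  rcases b with _ | b
  · refine ⟨_, 0, hα, by simp, h1, fun i j => ?_⟩
    by_cases hij : i = j
    · subst hij
      simpa using h1 i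
    · simp only [hij, if_false, add_zero]
      refine Finset.sum_eq_zero fun I _ => if_neg ?_
      rintro ⟨hi, hj⟩
      have := I.2
      exact hij (Finset.card_le_one.1 (by omega) i hi j hj)
  · refine ⟨_, (n.choose b : ℝ), hα, ?_, h1, fun i j => ?_⟩
    · have := Nat.add_one_mul_choose_eq n b
      have h : ((n : ℝ) + 1) * (n.choose b : ℝ) = ((n + 1).choose (b + 1) : ℝ) * (b + 1) := by
        exact_mod_cast this
      push_cast
      linarith
    · by_cases hij : i = j
      · subst hij
        simpa using h1 i
      · have := batch_count (b := b + 1 + 1) ({i, j} : Finset (Fin (n + 2)))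
          (by rw [Finset.card_pair hij]; omega)
        rw [Finset.card_pair hij] at this
        simpa [hij, Finset.insert_subset_iff] using this

lemma batch_nonempty {n b : ℕ} (hbn : b ≤ n) : Nonempty (Batch n b) := by
  obtain ⟨s, _, hs⟩ := Finset.exists_subset_card_eq (s := (Finset.univ : Finset (Fin n))) (n := b)
    (by simpa using hbn)
  exact ⟨⟨s, hs⟩⟩

lemma batch_variance_centered {d n b : ℕ} (hn : 2 ≤ n) (hb : 1 ≤ b) (hbn : b ≤ n)
    (y : Fin n → Vec d) (hy : ∑ i, y i = 0) (e : Vec d) :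
    expec (fun I : Batch n b => ‖(b : ℝ)⁻¹ • ∑ i ∈ I.1, y i + e‖ ^ 2)
      = ‖e‖ ^ 2 + (1 / (b : ℝ)) * (((n : ℝ) - b) / ((n : ℝ) - 1)) * ((n : ℝ)⁻¹ * ∑ i, ‖y i‖ ^ 2) := by
  obtain ⟨α, β, hα, hβ, h1, h2⟩ := batch_pair hn hb hbn
  have hind : ∀ I : Batch n b, ∑ i ∈ I.1, y i = ∑ i, (if i ∈ I.1 then (1 : ℝ) else 0) • y i := by
    intro I
    simp
  have hlin : ∑ I : Batch n b, ∑ i ∈ I.1, y i = 0 := by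
    simp_rw [hind]
    rw [Finset.sum_comm]
    simp_rw [← Finset.sum_smul, h1]
    rw [← Finset.smul_sum, hy, smul_zero]
  have hsq : ∑ I : Batch n b, ‖∑ i ∈ I.1, y i‖ ^ 2 = (α - β) * ∑ i, ‖y i‖ ^ 2 := by
    have e1 : ∀ I : Batch n b, ‖∑ i ∈ I.1, y i‖ ^ 2
        = ∑ i, ∑ j, (if i ∈ I.1 ∧ j ∈ I.1 then (1 : ℝ) else 0) * inner ℝ (y i) (y j) := by
      intro I
      rw [← real_inner_self_eq_norm_sq, hind, sum_inner]
      refine Finset.sum_congr rfl fun i _ => ?_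
      rw [inner_sum]
      refine Finset.sum_congr rfl fun j _ => ?_
      rw [real_inner_smul_left, real_inner_smul_right]
      by_cases hi : i ∈ I.1 <;> by_cases hj : j ∈ I.1 <;> simp [hi, hj]
    simp_rw [e1]
    rw [Finset.sum_comm]
    have e2 : ∀ i, ∑ I : Batch n b, ∑ j, (if i ∈ I.1 ∧ j ∈ I.1 then (1 : ℝ) else 0) * inner ℝ (y i) (y j)
        = β * inner ℝ (y i) (∑ j, y j) + (α - β) * ‖y i‖ ^ 2 := by
      intro i
      rw [Finset.sum_comm]
      simp_rw [← Finset.sum_mul, h2, add_mul]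
      rw [Finset.sum_add_distrib, ← Finset.mul_sum, inner_sum]
      simp
    simp_rw [e2, hy]
    simp [Finset.mul_sum]
  have hb0 : (0 : ℝ) < b := by exact_mod_cast hb
  have hn0 : (0 : ℝ) < n := by exact_mod_cast (by omega : 0 < n)
  have hn1 : (0 : ℝ) < (n : ℝ) - 1 := by
    have : (2 : ℝ) ≤ n := by exact_mod_cast hn
    linarith
  have hN : (Fintype.card (Batch n b) : ℝ) ≠ 0 := by
    have := batch_nonempty (n := n) hbn
    exact_mod_cast Fintype.card_ne_zero
  have hexp : ∀ I : Batch n b, ‖(b : ℝ)⁻¹ • ∑ i ∈ I.1, y i + e‖ ^ 2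
      = (b : ℝ)⁻¹ ^ 2 * ‖∑ i ∈ I.1, y i‖ ^ 2 + 2 * (b : ℝ)⁻¹ * inner ℝ (∑ i ∈ I.1, y i) e
        + ‖e‖ ^ 2 := by
    intro I
    rw [norm_add_sq_real, norm_smul, real_inner_smul_left, mul_pow, Real.norm_eq_abs, sq_abs]
    ring
  unfold expec
  simp_rw [hexp]
  rw [Finset.sum_add_distrib, Finset.sum_add_distrib, ← Finset.mul_sum, ← Finset.mul_sum, hsq,
    ← sum_inner, hlin]
  have hαv : α = b * (Fintype.card (Batch n b) : ℝ) / n := by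
    rw [eq_div_iff hn0.ne']; linarith
  have hβv : β = (b - 1) * α / ((n : ℝ) - 1) := by
    rw [eq_div_iff hn1.ne']; linarith
  have hab : α - β = b * (Fintype.card (Batch n b) : ℝ) * ((n : ℝ) - b) / (n * ((n : ℝ) - 1)) := by
    rw [hβv, hαv]; field_simp; ring
  rw [hab]
  simp
  field_simp
  ring

lemma batch_variance {d n b : ℕ} (hn : 2 ≤ n) (hb : 1 ≤ b) (hbn : b ≤ n)
    (x : Fin n → Vec d) (e : Vec d) :
    expec (fun I : Batch n b => ‖((b : ℝ)⁻¹ • ∑ i ∈ I.1, x i - (n : ℝ)⁻¹ • ∑ i, x i) + e‖ ^ 2)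
      ≤ ‖e‖ ^ 2 + (1 / (b : ℝ)) * (((n : ℝ) - b) / ((n : ℝ) - 1)) * ((n : ℝ)⁻¹ * ∑ i, ‖x i‖ ^ 2) := by
  have hb0 : (0 : ℝ) < b := by exact_mod_cast hb
  have hn0 : (0 : ℝ) < n := by exact_mod_cast (by omega : 0 < n)
  have hn1 : (0 : ℝ) < (n : ℝ) - 1 := by
    have : (2 : ℝ) ≤ n := by exact_mod_cast hn
    linarith
  have hnb : (0 : ℝ) ≤ (n : ℝ) - b := by
    have : (b : ℝ) ≤ n := by exact_mod_cast hbn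
    linarith
  set c : Vec d := (n : ℝ)⁻¹ • ∑ i, x i with hc
  have hsum : ∑ i, x i = (n : ℝ) • c := by
    rw [hc, smul_smul, mul_inv_cancel₀ hn0.ne', one_smul]
  have hy : ∑ i, (x i - c) = 0 := by
    rw [Finset.sum_sub_distrib, hsum]
    simp [← Nat.cast_smul_eq_nsmul ℝ]
  have key := batch_variance_centered hn hb hbn (fun i => x i - c) hy e
  have heq : ∀ I : Batch n b, (b : ℝ)⁻¹ • ∑ i ∈ I.1, (x i - c) = (b : ℝ)⁻¹ • ∑ i ∈ I.1, x i - c := by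
    intro I
    rw [Finset.sum_sub_distrib, smul_sub, Finset.sum_const, I.2, ← Nat.cast_smul_eq_nsmul ℝ, smul_smul,
      inv_mul_cancel₀ hb0.ne', one_smul]
  simp_rw [heq] at key
  rw [key]
  have hle : ∑ i, ‖x i - c‖ ^ 2 ≤ ∑ i, ‖x i‖ ^ 2 := by
    have : ∑ i, ‖x i - c‖ ^ 2 = ∑ i, ‖x i‖ ^ 2 - n * ‖c‖ ^ 2 := by
      simp_rw [norm_sub_sq_real]
      rw [Finset.sum_add_distrib, Finset.sum_sub_distrib, ← Finset.mul_sum, ← sum_inner, hsum,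
        real_inner_smul_left, real_inner_self_eq_norm_sq]
      simp
      ring
    rw [this]
    have : 0 ≤ (n : ℝ) * ‖c‖ ^ 2 := by positivity
    linarith
  have : 0 ≤ ((n : ℝ) - b) / ((n : ℝ) - 1) := div_nonneg hnb hn1.le
  gcongr

/-! ### Smoothness -/

lemma gradient_avg {d n : ℕ} (f : Fin n → Vec d → ℝ) (hdiff : ∀ i, Differentiable ℝ (f i))
    (w : Vec d) :
    HasGradientAt (fun w => (n : ℝ)⁻¹ * ∑ i, f i w) ((n : ℝ)⁻¹ • ∑ i, gradient (f i) w) w := by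
  rw [hasGradientAt_iff_hasFDerivAt]
  have h : ∀ i ∈ (Finset.univ : Finset (Fin n)),
      HasFDerivAt (f i) (InnerProductSpace.toDual ℝ (Vec d) (gradient (f i) w)) w :=
    fun i _ => hasGradientAt_iff_hasFDerivAt.1 (hdiff i w).hasGradientAt
  have h2 := (HasFDerivAt.fun_sum h).const_mul ((n : ℝ)⁻¹)
  simpa using h2

lemma descent {d : ℕ} (P : Vec d → ℝ) (L : ℝ) (hdiff : Differentiable ℝ P)
    (hsm : ∀ w w', ‖gradient P w - gradient P w'‖ ≤ L * ‖w - w'‖) (w u : Vec d) :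
    P (w + u) ≤ P w + inner ℝ (gradient P w) u + L / 2 * ‖u‖ ^ 2 := by
  let φ : ℝ → ℝ := fun t => P (w + t • u) - t * inner ℝ (gradient P w) u - L / 2 * ‖u‖ ^ 2 * t ^ 2
  have hd : ∀ t, HasDerivAt φ
      (inner ℝ (gradient P (w + t • u)) u - inner ℝ (gradient P w) u - L * ‖u‖ ^ 2 * t) t := by
    intro t
    have h1 : HasDerivAt (fun t : ℝ => w + t • u) u t := by
      simpa using ((hasDerivAt_id t).smul_const u).const_add w
    have h2 := (hasGradientAt_iff_hasFDerivAt.1 (hdiff (w + t • u)).hasGradientAt).comp_hasDerivAt t h1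
    have h3 := (h2.sub ((hasDerivAt_id t).mul_const (inner ℝ (gradient P w) u))).sub
      ((hasDerivAt_pow 2 t).const_mul (L / 2 * ‖u‖ ^ 2))
    refine (h3.congr_deriv ?_)
    simp
    ring
  have hanti : AntitoneOn φ (Set.Icc 0 1) := by
    refine antitoneOn_of_deriv_nonpos (convex_Icc 0 1)
      (fun t _ => (hd t).continuousAt.continuousWithinAt)
      (fun t _ => (hd t).differentiableAt.differentiableWithinAt) fun t ht => ?_
    rw [interior_Icc] at ht
    rw [(hd t).deriv, ← inner_sub_left]
    have h1 := real_inner_le_norm (gradient P (w + t • u) - gradient P w) u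
    have h2 := hsm (w + t • u) w
    rw [add_sub_cancel_left, norm_smul, Real.norm_eq_abs, abs_of_pos ht.1] at h2
    have h3 := mul_le_mul_of_nonneg_right h2 (norm_nonneg u)
    nlinarith
  have := hanti (Set.left_mem_Icc.2 zero_le_one) (Set.right_mem_Icc.2 zero_le_one) zero_le_one
  simp only [φ] at this
  simp [-inner_gradient_left] at this
  linarith

/-- One-step descent for an inexact gradient step. -/
lemma descent_step {d : ℕ} (P : Vec d → ℝ) (L : ℝ) (hdiff : Differentiable ℝ P)
    (hsm : ∀ w w', ‖gradient P w - gradient P w'‖ ≤ L * ‖w - w'‖) (w v : Vec d)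
    (η : ℝ) (hη : 0 < η) :
    2 / η * P (w - η • v) ≤ 2 / η * P w - ‖gradient P w‖ ^ 2 + ‖gradient P w - v‖ ^ 2
      - (1 - L * η) * ‖v‖ ^ 2 := by
  have h := descent P L hdiff hsm w (-(η • v))
  rw [← sub_eq_add_neg, inner_neg_right, real_inner_smul_right, norm_neg, norm_smul, mul_pow,
    Real.norm_eq_abs, sq_abs] at h
  have h2 := mul_le_mul_of_nonneg_left h (by positivity : 0 ≤ 2 / η)
  rw [norm_sub_sq_real]
  refine h2.trans (le_of_eq ?_)
  field_simp
  ring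

/-! ### Inner loop -/

/-- One step of SARAH-IN. -/
def sstep {d n : ℕ} (f : Fin n → Vec d → ℝ) (η : ℝ) (b : ℕ) (p : Vec d × Vec d)
    (I : Finset (Fin n)) : Vec d × Vec d :=
  (p.1 - η • p.2,
    (b : ℝ)⁻¹ • ∑ i ∈ I, (gradient (f i) (p.1 - η • p.2) - gradient (f i) p.1) + p.2)

/-- Iteration of `sstep`. -/
def srun {d n : ℕ} (f : Fin n → Vec d → ℝ) (η : ℝ) (b : ℕ) (p : Vec d × Vec d)
    (J : ℕ → Finset (Fin n)) : ℕ → Vec d × Vec d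
  | 0 => p
  | t + 1 => sstep f η b (srun f η b p J t) (J t)

lemma srun_succ {d n : ℕ} (f : Fin n → Vec d → ℝ) (η : ℝ) (b : ℕ) (p : Vec d × Vec d)
    (J : ℕ → Finset (Fin n)) (t : ℕ) :
    srun f η b p J (t + 1) = srun f η b (sstep f η b p (J 0)) (fun k => J (k + 1)) t := by
  induction t with
  | zero => rfl
  | succ t ih => rw [srun, ih]; rfl

lemma sarahState_eq_srun {d n : ℕ} (f : Fin n → Vec d → ℝ) (w0 : Vec d) (η : ℝ) (b : ℕ)
    (I : ℕ → Finset (Fin n)) (t : ℕ) :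
    sarahState f w0 η b I t
      = srun f η b (w0, (n : ℝ)⁻¹ • ∑ i, gradient (f i) w0) (fun k => I (k + 1)) t := by
  induction t with
  | zero => rfl
  | succ t ih => rw [srun, ← ih]; rfl

lemma pad_cons_zero {n b T : ℕ} (a : Batch n b) (ω : Fin T → Batch n b) :
    pad (Fin.cons a ω : Fin (T + 1) → Batch n b) 0 = a.1 := by
  simp only [pad, Nat.succ_pos, dif_pos]
  rfl

lemma pad_cons_succ {n b T : ℕ} (a : Batch n b) (ω : Fin T → Batch n b) (k : ℕ) :
    pad (Fin.cons a ω : Fin (T + 1) → Batch n b) (k + 1) = pad ω k := by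
  unfold pad
  by_cases h : k < T
  · rw [dif_pos h, dif_pos (Nat.succ_lt_succ h)]
    rfl
  · rw [dif_neg h, dif_neg (by omega)]

lemma inner_bound {d n : ℕ} (hn : 2 ≤ n)
    (f : Fin n → Vec d → ℝ) (L : ℝ) (hL : 0 < L)
    (hsmooth : ∀ i (w w' : Vec d),
      ‖gradient (f i) w - gradient (f i) w'‖ ≤ L * ‖w - w'‖)
    (P : Vec d → ℝ) (hPd : Differentiable ℝ P)
    (hPg : ∀ w, gradient P w = (n : ℝ)⁻¹ • ∑ i, gradient (f i) w)
    (hPs : ∀ w w', ‖gradient P w - gradient P w'‖ ≤ L * ‖w - w'‖)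
    (wstar : Vec d) (hmin : ∀ w, P wstar ≤ P w)
    (η : ℝ) (hη : 0 < η) (b m : ℕ) (hb : 1 ≤ b) (hbn : b ≤ n) (c : ℝ)
    (hc : c = (1 / (b : ℝ)) * (((n : ℝ) - b) / ((n : ℝ) - 1))) (hc0 : 0 ≤ c)
    (hstep : m * (c * (L * η) ^ 2) ≤ 1 - L * η) (k : ℕ) (hk : k ≤ m) :
    ∀ p : Vec d × Vec d,
    expec (fun ω : Fin k → Batch n b =>
        ∑ t ∈ Finset.range (k + 1), ‖gradient P (srun f η b p (pad ω) t).1‖ ^ 2)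
      ≤ 2 / η * (P p.1 - P wstar) + (k + 1) * ‖gradient P p.1 - p.2‖ ^ 2 := by
  have := batch_nonempty (n := n) hbn
  have hx : 0 ≤ 1 - L * η := le_trans (by positivity) hstep
  have hn0 : (0 : ℝ) < n := by exact_mod_cast (by omega : 0 < n)
  induction k with
  | zero =>
    intro p
    have h := descent_step P L hPd hPs p.1 p.2 η hη
    have h2 := mul_le_mul_of_nonneg_left (hmin (p.1 - η • p.2)) (by positivity : 0 ≤ 2 / η)
    have h3 := mul_nonneg hx (sq_nonneg ‖p.2‖)
    simp [expec, srun]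
    linarith
  | succ k ih =>
    intro p
    have ih := ih (by omega)
    rw [expec_cons]
    have e1 : ∀ (a : Batch n b) (ω : Fin k → Batch n b),
        ∑ t ∈ Finset.range (k + 1 + 1), ‖gradient P (srun f η b p (pad (Fin.cons a ω : Fin (k + 1) → Batch n b)) t).1‖ ^ 2
        = ‖gradient P p.1‖ ^ 2 + ∑ t ∈ Finset.range (k + 1),
          ‖gradient P (srun f η b (sstep f η b p a.1) (pad ω) t).1‖ ^ 2 := by
      intro a ω
      rw [Finset.sum_range_succ', add_comm]
      congr 1
      refine Finset.sum_congr rfl fun t _ => ?_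
      rw [srun_succ, pad_cons_zero]
      simp_rw [pad_cons_succ]
    simp_rw [e1, expec_const_add]
    set w' := p.1 - η • p.2 with hw'
    have e2 := expec_mono fun a : Batch n b => ih (sstep f η b p a.1)
    have e3 : ∀ a : Batch n b, 2 / η * (P (sstep f η b p a.1).1 - P wstar)
          + ((k : ℝ) + 1) * ‖gradient P (sstep f η b p a.1).1 - (sstep f η b p a.1).2‖ ^ 2
        = 2 / η * (P w' - P wstar) + ((k : ℝ) + 1) *
          ‖((b : ℝ)⁻¹ • ∑ i ∈ a.1, (gradient (f i) w' - gradient (f i) p.1)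
            - (n : ℝ)⁻¹ • ∑ i, (gradient (f i) w' - gradient (f i) p.1))
            + (p.2 - gradient P p.1)‖ ^ 2 := by
      intro a
      have : gradient P (sstep f η b p a.1).1 - (sstep f η b p a.1).2
          = -(((b : ℝ)⁻¹ • ∑ i ∈ a.1, (gradient (f i) w' - gradient (f i) p.1)
            - (n : ℝ)⁻¹ • ∑ i, (gradient (f i) w' - gradient (f i) p.1))
            + (p.2 - gradient P p.1)) := by
        simp only [sstep, ← hw']
        rw [Finset.sum_sub_distrib (s := Finset.univ), smul_sub, ← hPg, ← hPg]
        abel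
      rw [this, norm_neg]
      rfl
    simp_rw [e3, expec_const_add, expec_const_mul] at e2
    have hv := batch_variance hn hb hbn (fun i => gradient (f i) w' - gradient (f i) p.1)
      (p.2 - gradient P p.1)
    rw [← hc] at hv
    have hs : (n : ℝ)⁻¹ * ∑ i, ‖gradient (f i) w' - gradient (f i) p.1‖ ^ 2
        ≤ (L * η) ^ 2 * ‖p.2‖ ^ 2 := by
      have : ∑ i, ‖gradient (f i) w' - gradient (f i) p.1‖ ^ 2
          ≤ ∑ _i : Fin n, (L * η) ^ 2 * ‖p.2‖ ^ 2 := by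
        refine Finset.sum_le_sum fun i _ => ?_
        have h := hsmooth i w' p.1
        have h' : ‖w' - p.1‖ = η * ‖p.2‖ := by
          rw [hw', sub_sub_cancel_left, norm_neg, norm_smul, Real.norm_eq_abs, abs_of_pos hη]
        rw [h'] at h
        calc _ ≤ (L * (η * ‖p.2‖)) ^ 2 := by gcongr
          _ = _ := by ring
      rw [Finset.sum_const, Finset.card_univ, Fintype.card_fin, nsmul_eq_mul] at this
      rw [inv_mul_le_iff₀ hn0]
      exact this
    have hs2 := mul_le_mul_of_nonneg_left hs hc0
    have hv2 := hv.trans (add_le_add_right hs2 _)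
    have hv3 := mul_le_mul_of_nonneg_left hv2 (by positivity : 0 ≤ (k : ℝ) + 1)
    have hd := descent_step P L hPd hPs p.1 p.2 η hη
    rw [← hw'] at hd
    rw [norm_sub_rev p.2] at hv3
    have hkm : ((k : ℝ) + 1) * (c * (L * η) ^ 2) ≤ 1 - L * η := by
      refine le_trans ?_ hstep
      have : (k : ℝ) + 1 ≤ m := by exact_mod_cast hk
      gcongr
    have hkm2 := mul_le_mul_of_nonneg_right hkm (sq_nonneg ‖p.2‖)
    push_cast
    linarith

lemma step_size {L η c m : ℝ} (hL : 0 < L) (hη : 0 < η) (hcm : 0 ≤ c * m)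
    (h : η ≤ 2 / (L * (Real.sqrt (1 + 4 * (c * m)) + 1))) :
    m * (c * (L * η) ^ 2) ≤ 1 - L * η := by
  set r := Real.sqrt (1 + 4 * (c * m)) with hr
  have hr0 : 0 ≤ r := Real.sqrt_nonneg _
  have hr2 : r ^ 2 = 1 + 4 * (c * m) := Real.sq_sqrt (by linarith)
  rw [le_div_iff₀ (by positivity)] at h
  have hx : 0 < L * η := by positivity
  have h1 : (L * η) * (r + 1) ≤ 2 := by linarith
  have hcmr : c * m = (r ^ 2 - 1) / 4 := by linarith
  have : m * (c * (L * η) ^ 2) = ((L * η * r) ^ 2 - (L * η) ^ 2) / 4 := by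
    rw [← mul_assoc, mul_comm m c, hcmr]; ring
  rw [this]
  have h2 : L * η * r ≤ 2 - L * η := by linarith
  have h3 : 0 ≤ L * η * r := by positivity
  nlinarith

/-! ### Outer loop -/

lemma outerIter_succ {d n : ℕ} (f : Fin n → Vec d → ℝ) (w0 : Vec d) (η : ℝ) (b : ℕ)
    (ω : ℕ → (ℕ → Finset (Fin n)) × ℕ) (s : ℕ) :
    outerIter f w0 η b ω (s + 1)
      = outerIter f (sarahState f w0 η b (ω 0).1 (ω 0).2).1 η b (fun k => ω (k + 1)) s := by
  induction s with
  | zero => rfl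
  | succ s ih => rw [outerIter, ih]; rfl

lemma padOuter_cons_zero {n b m S : ℕ} (a : (Fin (m + 1) → Batch n b) × Fin (m + 1))
    (ω : Fin S → (Fin (m + 1) → Batch n b) × Fin (m + 1)) :
    padOuter (Fin.cons a ω : Fin (S + 1) → (Fin (m + 1) → Batch n b) × Fin (m + 1)) 0
      = (pad a.1, (a.2 : ℕ)) := by
  simp only [padOuter, Nat.succ_pos, dif_pos]
  rfl

lemma padOuter_cons_succ {n b m S : ℕ} (a : (Fin (m + 1) → Batch n b) × Fin (m + 1))
    (ω : Fin S → (Fin (m + 1) → Batch n b) × Fin (m + 1)) (k : ℕ) :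
    padOuter (Fin.cons a ω : Fin (S + 1) → (Fin (m + 1) → Batch n b) × Fin (m + 1)) (k + 1)
      = padOuter ω k := by
  unfold padOuter
  by_cases h : k < S
  · rw [dif_pos h, dif_pos (Nat.succ_lt_succ h)]
    rfl
  · rw [dif_neg h, dif_neg (by omega)]

/-- **Theorem 2 of SARAH (nonconvex).** For `τ`-gradient dominated `P`, full SARAH
converges linearly: `E‖∇P(w̃_s)‖² ≤ γ̄ₘ^s ‖∇P(w̃₀)‖²` with `γ̄ₘ = 2τ/(η(m+1)) < 1`. -/
theorem sarah_gradient_dominated_linear_convergence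
    {d n : ℕ} (hn : 2 ≤ n)
    (f : Fin n → Vec d → ℝ) (L : ℝ) (hL : 0 < L)
    (hdiff : ∀ i, Differentiable ℝ (f i))
    (hsmooth : ∀ i (w w' : Vec d),
      ‖gradient (f i) w - gradient (f i) w'‖ ≤ L * ‖w - w'‖)
    (P : Vec d → ℝ) (hP : P = fun w => (n : ℝ)⁻¹ * ∑ i, f i w)
    (wstar : Vec d) (hmin : ∀ w, P wstar ≤ P w)
    (τ : ℝ) (hτ : 0 < τ) (hdom : ∀ w, P w - P wstar ≤ τ * ‖gradient P w‖ ^ 2)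
    (w0 : Vec d) (η : ℝ) (hη : 0 < η) (b m : ℕ) (hb : 1 ≤ b) (hbn : b ≤ n)
    (hη2 : η ≤ 2 / (L * (Real.sqrt (1 + 4 * (m : ℝ) / (b : ℝ)
      * (((n : ℝ) - (b : ℝ)) / ((n : ℝ) - 1))) + 1)))
    (hτm : τ < η * ((m : ℝ) + 1) / 2) (s : ℕ) :
    2 * τ / (η * ((m : ℝ) + 1)) < 1 ∧
      expec (fun ω : Fin s → (Fin (m + 1) → Batch n b) × Fin (m + 1) =>
          ‖gradient P (outerIter f w0 η b (padOuter ω) s)‖ ^ 2)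
        ≤ (2 * τ / (η * ((m : ℝ) + 1))) ^ s * ‖gradient P w0‖ ^ 2 := by
  have hn0 : (0 : ℝ) < n := by exact_mod_cast (by omega : 0 < n)
  have hb0 : (0 : ℝ) < b := by exact_mod_cast hb
  have hn1 : (0 : ℝ) < (n : ℝ) - 1 := by
    have : (2 : ℝ) ≤ n := by exact_mod_cast hn
    linarith
  have hnb : (0 : ℝ) ≤ (n : ℝ) - b := by
    have : (b : ℝ) ≤ n := by exact_mod_cast hbn
    linarith
  have hm0 : (0 : ℝ) < (m : ℝ) + 1 := by positivity
  have hden : 0 < η * ((m : ℝ) + 1) := by positivity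
  refine ⟨by rw [div_lt_one hden]; linarith, ?_⟩
  have := batch_nonempty (n := n) hbn
  have hPgr : ∀ w, HasGradientAt P ((n : ℝ)⁻¹ • ∑ i, gradient (f i) w) w := by
    intro w; rw [hP]; exact gradient_avg f hdiff w
  have hPg : ∀ w, gradient P w = (n : ℝ)⁻¹ • ∑ i, gradient (f i) w := fun w => (hPgr w).gradient
  have hPd : Differentiable ℝ P := fun w => (hPgr w).differentiableAt
  have hPs : ∀ w w', ‖gradient P w - gradient P w'‖ ≤ L * ‖w - w'‖ := by
    intro w w'
    rw [hPg, hPg, ← smul_sub, ← Finset.sum_sub_distrib, norm_smul, norm_inv, Real.norm_natCast,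
      inv_mul_le_iff₀ hn0]
    refine (norm_sum_le _ _).trans ((Finset.sum_le_sum fun i _ => hsmooth i w w').trans ?_)
    simp
  set c : ℝ := (1 / (b : ℝ)) * (((n : ℝ) - b) / ((n : ℝ) - 1)) with hc
  have hc0 : 0 ≤ c := mul_nonneg (by positivity) (div_nonneg hnb hn1.le)
  have hstep : m * (c * (L * η) ^ 2) ≤ 1 - L * η := by
    refine step_size hL hη (by positivity) (hη2.trans (le_of_eq ?_))
    congr 5
    rw [hc]; ring
  have hinner : ∀ w : Vec d, expec (fun a : (Fin (m + 1) → Batch n b) × Fin (m + 1) =>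
      ‖gradient P (sarahState f w η b (pad a.1) (a.2 : ℕ)).1‖ ^ 2)
      ≤ 2 * τ / (η * ((m : ℝ) + 1)) * ‖gradient P w‖ ^ 2 := by
    intro w
    have hb1 := inner_bound hn f L hL hsmooth P hPd hPg hPs wstar hmin η hη b m hb hbn c hc hc0
      hstep m le_rfl (w, gradient P w)
    simp only [sub_self, norm_zero] at hb1
    rw [expec_prod, expec_cons]
    have e1 : ∀ (a : Batch n b) (ω : Fin m → Batch n b),
        expec (fun t : Fin (m + 1) => ‖gradient P (sarahState f w η b
          (pad (Fin.cons a ω : Fin (m + 1) → Batch n b)) (t : ℕ)).1‖ ^ 2)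
        = ((m : ℝ) + 1)⁻¹ * ∑ t ∈ Finset.range (m + 1),
          ‖gradient P (srun f η b (w, gradient P w) (pad ω) t).1‖ ^ 2 := by
      intro a ω
      unfold expec
      rw [Fin.sum_univ_eq_sum_range (fun t => ‖gradient P (sarahState f w η b
          (pad (Fin.cons a ω : Fin (m + 1) → Batch n b)) t).1‖ ^ 2) (m + 1)]
      simp_rw [sarahState_eq_srun, pad_cons_succ, ← hPg]
      simp
    simp_rw [e1, expec_const_mul]
    have hconst : ∀ x : ℝ, expec (fun _ : Batch n b => x) = x := by
      intro x
      have : (Fintype.card (Batch n b) : ℝ) ≠ 0 := by exact_mod_cast Fintype.card_ne_zero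
      simp [expec, this]
    rw [hconst, inv_mul_le_iff₀ hm0]
    refine hb1.trans ?_
    have h2 := mul_le_mul_of_nonneg_left (hdom w) (by positivity : 0 ≤ 2 / η)
    have e3 : ((m : ℝ) + 1) * (2 * τ / (η * ((m : ℝ) + 1)) * ‖gradient P w‖ ^ 2)
        = 2 / η * (τ * ‖gradient P w‖ ^ 2) := by
      field_simp
    rw [e3]
    simpa using h2
  have hγ : 0 ≤ 2 * τ / (η * ((m : ℝ) + 1)) := by positivity
  induction s generalizing w0 with
  | zero => simp [expec, outerIter]
  | succ s ih =>
    rw [expec_cons]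
    simp_rw [outerIter_succ, padOuter_cons_zero, padOuter_cons_succ]
    refine (expec_mono fun a => ih _).trans ?_
    rw [expec_const_mul, pow_succ, mul_assoc]
    exact mul_le_mul_of_nonneg_left (hinner w0) (pow_nonneg hγ s)
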